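/- arXiv:1906.05485 — 3 statements merged into one kernel-verified Lean document; each statement's English description precedes it below -/
import Mathlib

section
/- Let ε > 0, let A ≥ 0, let k ≥ 1 be an integer, and let U : ℝ → ℝ be a fixed smooth function compactly supported in [1,2]. Then there is a constant C, depending only on k, U, A and ε, such that for all a, b > 0 and X > 1 with b²X > 1 and |a − b|·√X ≥ X^ε, one has |I_k(a,b;X)| ≤ C·X^{−A}. -/
/-- `e(t) = exp(2πit)`. -/
noncomputable def e (t : ℝ) : ℂ := Complex.exp (2 * (Real.pi : ℂ) * Complex.I * t)

/-- The Bessel function of the first kind of integer order `m`: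
`J_m(x) = Σ_{n≥0} (−1)^n (x/2)^{m+2n} / (n! (m+n)!)`. -/
noncomputable def besselJ (m : ℕ) (x : ℝ) : ℝ :=
  ∑' n : ℕ, (-1 : ℝ) ^ n * (x / 2) ^ (m + 2 * n) / ((n.factorial : ℝ) * ((m + n).factorial : ℝ))

/-- The Bessel integral `I_k(a,b;X) = ∫_0^∞ U(x/X) e(2a√x) J_{k−1}(4πb√x) dx`. -/
noncomputable def Ik (U : ℝ → ℝ) (k : ℕ) (a b X : ℝ) : ℂ :=
  ∫ x in Set.Ioi (0 : ℝ),
    (U (x / X) : ℂ) * e (2 * a * Real.sqrt x) *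
      (besselJ (k - 1) (4 * Real.pi * b * Real.sqrt x) : ℂ)


noncomputable def bf (m : ℕ) (w : ℝ) : ℝ :=
  ∑' n : ℕ, (-1 : ℝ) ^ n * w ^ n / ((n.factorial : ℝ) * ((m + n).factorial : ℝ))

lemma bterm_bound (m n : ℕ) (w R : ℝ) (h : |w| ≤ R) :
    ‖(-1 : ℝ) ^ n * w ^ n / ((n.factorial : ℝ) * ((m + n).factorial : ℝ))‖ ≤ R ^ n / n.factorial := by
  have h1 : (1 : ℝ) ≤ (m + n).factorial := by exact_mod_cast Nat.succ_le_of_lt (Nat.factorial_pos _)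
  have h2 : (0 : ℝ) < n.factorial := by exact_mod_cast Nat.factorial_pos _
  have h3 : (0 : ℝ) ≤ R := (abs_nonneg w).trans h
  rw [norm_div, norm_mul, norm_pow, norm_pow, norm_neg, norm_one, one_pow, one_mul, norm_mul,
    Real.norm_eq_abs, Real.norm_of_nonneg h2.le, Real.norm_of_nonneg (by positivity)]
  have h4 : |w| ^ n ≤ R ^ n := by gcongr
  have h5 : (n.factorial : ℝ) ≤ n.factorial * (m + n).factorial := by nlinarith
  gcongr

lemma bf_summable (m : ℕ) (w : ℝ) :
    Summable (fun n : ℕ => (-1 : ℝ) ^ n * w ^ n / ((n.factorial : ℝ) * ((m + n).factorial : ℝ))) :=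
  Summable.of_norm_bounded (Real.summable_pow_div_factorial |w|)
    (fun n => bterm_bound m n w |w| le_rfl)

lemma HasSum.congr_fun' {f g : ℕ → ℝ} {a : ℝ} (h : HasSum f a) (hfg : g = f) : HasSum g a := by
  rw [hfg]; exact h

lemma bf_hasDerivAt (m : ℕ) (w : ℝ) : HasDerivAt (bf m) (-bf (m + 1) w) w := by
  have key := hasDerivAt_tsum_of_isPreconnected
    (g := fun (n : ℕ) (w : ℝ) => (-1 : ℝ) ^ n * w ^ n / ((n.factorial : ℝ) * ((m + n).factorial : ℝ)))
    (g' := fun (n : ℕ) (w : ℝ) => (-1 : ℝ) ^ n * (n * w ^ (n - 1)) / ((n.factorial : ℝ) * ((m + n).factorial : ℝ)))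
    (u := fun n : ℕ => (n : ℝ) * (|w| + 1) ^ (n - 1) / n.factorial)
    (t := Metric.ball (0 : ℝ) (|w| + 1)) (y₀ := w) (y := w) ?_ Metric.isOpen_ball
    (convex_ball _ _).isPreconnected ?_ ?_ (by simp) (bf_summable m w) (by simp)
  · have e1 : (∑' n : ℕ, (-1 : ℝ) ^ n * (n * w ^ (n - 1)) / ((n.factorial : ℝ) * ((m + n).factorial : ℝ)))
        = -bf (m + 1) w := by
      have hs := (bf_summable (m + 1) w).hasSum.neg
      have : HasSum (fun n : ℕ => (-1 : ℝ) ^ n * (n * w ^ (n - 1)) / ((n.factorial : ℝ) * ((m + n).factorial : ℝ))) (-bf (m + 1) w) := by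
        rw [← hasSum_nat_add_iff' 1]
        simp only [Finset.sum_range_one, Nat.cast_zero, zero_mul, mul_zero, zero_div, sub_zero]
        refine HasSum.congr_fun' hs (funext fun n => ?_)
        have : m + (n + 1) = m + 1 + n := by ring
        rw [this, Nat.factorial_succ n, add_tsub_cancel_right]
        have h2 : (n.factorial : ℝ) ≠ 0 := by exact_mod_cast Nat.factorial_ne_zero _
        have h3 : ((m + 1 + n).factorial : ℝ) ≠ 0 := by exact_mod_cast Nat.factorial_ne_zero _
        push_cast
        field_simp
        ring
      exact this.tsum_eq
    rw [e1] at key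
    exact key
  · rw [← summable_nat_add_iff 1]
    refine (Real.summable_pow_div_factorial (|w| + 1)).congr fun n => ?_
    rw [Nat.factorial_succ n, add_tsub_cancel_right]
    have h2 : (n.factorial : ℝ) ≠ 0 := by exact_mod_cast Nat.factorial_ne_zero _
    push_cast
    field_simp
  · intro n y _
    exact ((hasDerivAt_pow n y).const_mul _).div_const _
  · intro n y hy
    have hy' : |y| ≤ |w| + 1 := by simpa using (Metric.mem_ball.1 hy).le
    have h1 : (1 : ℝ) ≤ (m + n).factorial := by exact_mod_cast Nat.succ_le_of_lt (Nat.factorial_pos _)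
    have h2 : (0 : ℝ) < n.factorial := by exact_mod_cast Nat.factorial_pos _
    rw [norm_div, norm_mul, norm_pow, norm_mul, norm_pow, norm_neg, norm_one, one_pow, one_mul, norm_mul,
      Real.norm_eq_abs y, Real.norm_of_nonneg h2.le, Real.norm_of_nonneg (by positivity), Real.norm_of_nonneg (by positivity)]
    have h4 : |y| ^ (n - 1) ≤ (|w| + 1) ^ (n - 1) := by gcongr
    have h5 : (n.factorial : ℝ) ≤ n.factorial * (m + n).factorial := by nlinarith
    gcongr

lemma bf_rec (m : ℕ) (w : ℝ) : w * bf (m + 2) w = (m + 1) * bf (m + 1) w - bf m w := by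
  have h := ((bf_summable (m + 1) w).hasSum.mul_left ((m : ℝ) + 1)).sub (bf_summable m w).hasSum
  have h' := (bf_summable (m + 2) w).hasSum.mul_left w
  rw [← hasSum_nat_add_iff' 1] at h
  have h0 : ((m + 1).factorial : ℝ) = (m + 1) * m.factorial := by
    rw [Nat.factorial_succ]; push_cast; ring
  have hm : (m.factorial : ℝ) ≠ 0 := by exact_mod_cast Nat.factorial_ne_zero _
  have hm1 : (m : ℝ) + 1 ≠ 0 := by positivity
  have hz : ∑ n ∈ Finset.range 1, ((m + 1 : ℝ) * ((-1 : ℝ) ^ n * w ^ n / ((n.factorial : ℝ) * ((m + 1 + n).factorial : ℝ)))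
      - (-1 : ℝ) ^ n * w ^ n / ((n.factorial : ℝ) * ((m + n).factorial : ℝ))) = 0 := by
    simp [h0]
    field_simp
    ring
  rw [hz, sub_zero] at h
  refine h'.unique ?_
  refine HasSum.congr_fun' h (funext fun n => ?_)
  have a1 : m + 1 + (n + 1) = m + n + 1 + 1 := by ring
  have a2 : m + (n + 1) = m + n + 1 := by ring
  have a3 : m + 2 + n = m + n + 1 + 1 := by ring
  rw [a1, a2, a3, Nat.factorial_succ (m + n + 1), Nat.factorial_succ n]
  have h2 : (n.factorial : ℝ) ≠ 0 := by exact_mod_cast Nat.factorial_ne_zero _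
  have h3 : ((m + n + 1).factorial : ℝ) ≠ 0 := by exact_mod_cast Nat.factorial_ne_zero _
  have h4 : (m : ℝ) + n + 1 + 1 ≠ 0 := by positivity
  push_cast
  field_simp
  ring

lemma besselJ_eq (m : ℕ) (x : ℝ) : besselJ m x = (x / 2) ^ m * bf m (x ^ 2 / 4) := by
  unfold besselJ bf
  rw [← tsum_mul_left]
  congr 1
  funext n
  have : x ^ 2 / 4 = (x / 2) ^ 2 := by ring
  rw [this, pow_add, pow_mul]
  ring

lemma besselJ_deriv (m : ℕ) (x : ℝ) (hx : 0 < x) :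
    HasDerivAt (besselJ m) (m / x * besselJ m x - besselJ (m + 1) x) x := by
  have e1 : besselJ m = fun x => (x / 2) ^ m * bf m (x ^ 2 / 4) := funext (besselJ_eq m)
  have h1 : HasDerivAt (fun x : ℝ => x ^ 2 / 4) (x / 2) x := by
    refine ((hasDerivAt_pow 2 x).div_const 4).congr_deriv ?_
    push_cast; ring
  have h2 := (bf_hasDerivAt m (x ^ 2 / 4)).comp x h1
  have h3 := ((hasDerivAt_id x).div_const 2).pow m
  have h4 := h3.mul h2
  rw [besselJ_eq, besselJ_eq, e1]
  refine h4.congr_deriv ?_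
  simp only [id, Function.comp, Pi.pow_apply]
  rcases m with _ | m
  · simp; ring
  · rw [add_tsub_cancel_right]
    have : x ≠ 0 := hx.ne'
    push_cast
    field_simp
    ring

lemma besselJ_rec (m : ℕ) (x : ℝ) (hx : 0 < x) :
    besselJ (m + 2) x = 2 * (m + 1) / x * besselJ (m + 1) x - besselJ m x := by
  have h := bf_rec m (x ^ 2 / 4)
  simp only [besselJ_eq]
  have e : (x / 2) ^ (m + 2) * bf (m + 2) (x ^ 2 / 4) = (x / 2) ^ m * (x ^ 2 / 4 * bf (m + 2) (x ^ 2 / 4)) := by ring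
  rw [e, h, pow_succ]
  field_simp
  ring

noncomputable def bJ1 (m : ℕ) (x : ℝ) : ℝ := m / x * besselJ m x - besselJ (m + 1) x

lemma bJ1_deriv (m : ℕ) (x : ℝ) (hx : 0 < x) :
    HasDerivAt (bJ1 m) (-(bJ1 m x) / x - (1 - m ^ 2 / x ^ 2) * besselJ m x) x := by
  have h1 := ((hasDerivAt_inv hx.ne').const_mul (m : ℝ)).mul (besselJ_deriv m x hx)
  have h2 := besselJ_deriv (m + 1) x hx
  rw [besselJ_rec m x hx] at h2
  refine (h1.sub h2).congr_deriv ?_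
  simp only [bJ1]
  push_cast
  field_simp
  ring

lemma besselJ_bound (m : ℕ) : ∃ M : ℝ, 0 < M ∧ ∀ x : ℝ, 1/2 ≤ x → |besselJ m x| ≤ M := by
  set F : ℝ → ℝ := fun x => (besselJ m x ^ 2 + bJ1 m x ^ 2) * Real.exp (m ^ 2 / x) with hF
  have hd : ∀ x : ℝ, 0 < x → HasDerivAt F
      ((2 * besselJ m x * bJ1 m x + 2 * bJ1 m x * (-(bJ1 m x) / x - (1 - m ^ 2 / x ^ 2) * besselJ m x))
        * Real.exp (m ^ 2 / x) + (besselJ m x ^ 2 + bJ1 m x ^ 2) * (Real.exp (m ^ 2 / x) * (m ^ 2 * (-(x ^ 2)⁻¹)))) x := by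
    intro x hx
    have h1 := (besselJ_deriv m x hx).pow 2
    have h2 := (bJ1_deriv m x hx).pow 2
    have h3 := ((hasDerivAt_inv hx.ne').const_mul ((m : ℝ) ^ 2)).exp
    have h4 := (h1.add h2).mul h3
    refine h4.congr_deriv ?_
    simp [bJ1, div_eq_mul_inv]
  have hanti : AntitoneOn F (Set.Ici (1/2)) := by
    apply antitoneOn_of_deriv_nonpos (convex_Ici _)
    · intro x hx
      have : 0 < x := lt_of_lt_of_le (by norm_num) hx
      exact (hd x this).continuousAt.continuousWithinAt
    · intro x hx
      rw [interior_Ici] at hx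
      have : 0 < x := lt_trans (by norm_num) hx
      exact (hd x this).differentiableAt.differentiableWithinAt
    · intro x hx
      rw [interior_Ici] at hx
      have hx0 : 0 < x := lt_trans (by norm_num) hx
      rw [(hd x hx0).deriv]
      have e : (2 * besselJ m x * bJ1 m x + 2 * bJ1 m x * (-(bJ1 m x) / x - (1 - m ^ 2 / x ^ 2) * besselJ m x))
        * Real.exp (m ^ 2 / x) + (besselJ m x ^ 2 + bJ1 m x ^ 2) * (Real.exp (m ^ 2 / x) * (m ^ 2 * (-(x ^ 2)⁻¹)))
        = -(Real.exp (m ^ 2 / x) * (2 * bJ1 m x ^ 2 / x + m ^ 2 / x ^ 2 * (besselJ m x - bJ1 m x) ^ 2)) := by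
        field_simp
        ring
      rw [e, neg_nonpos]
      positivity
  refine ⟨F (1/2) + 1, ?_, ?_⟩
  · have : 0 ≤ F (1/2) := by simp only [hF]; positivity
    linarith
  · intro x hx
    have h := hanti (Set.mem_Ici.2 le_rfl) (Set.mem_Ici.2 hx) hx
    have hx0 : 0 < x := by linarith
    have h1 : 1 ≤ Real.exp ((m : ℝ) ^ 2 / x) := Real.one_le_exp (by positivity)
    have h2 : besselJ m x ^ 2 ≤ F x := by
      simp only [hF]
      nlinarith [sq_nonneg (besselJ m x), sq_nonneg (bJ1 m x)]
    have h3 := sq_abs (besselJ m x)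
    nlinarith [sq_nonneg (|besselJ m x| - 1), abs_nonneg (besselJ m x), sq_nonneg (|besselJ m x|)]

def annS : Set ℝ := {t | 1 ≤ |t| ∧ |t| ≤ 2}

lemma annS_closed : IsClosed annS :=
  (isClosed_le continuous_const continuous_abs).inter (isClosed_le continuous_abs continuous_const)

def goodF (φ : ℝ → ℝ) : Prop := ContDiff ℝ (⊤ : ℕ∞) φ ∧ Function.support φ ⊆ annS

lemma goodF.deriv {φ : ℝ → ℝ} (h : goodF φ) : goodF (deriv φ) :=
  ⟨(contDiff_infty_iff_deriv.1 h.1).2,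
    (support_deriv_subset).trans (closure_minimal h.2 annS_closed)⟩

lemma goodF.zero {φ : ℝ → ℝ} (h : goodF φ) {t : ℝ} (ht : t ∉ annS) : φ t = 0 := by
  by_contra hne
  exact ht (h.2 hne)

lemma goodF.zero_half {φ : ℝ → ℝ} (h : goodF φ) : φ (1/2) = 0 :=
  h.zero (by simp only [annS, Set.mem_ofPred_eq]; rw [abs_of_pos] <;> norm_num)

lemma goodF.zero_three {φ : ℝ → ℝ} (h : goodF φ) : φ 3 = 0 :=
  h.zero (by simp only [annS, Set.mem_ofPred_eq]; rw [abs_of_pos] <;> norm_num)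

lemma goodF.div {φ : ℝ → ℝ} (h : goodF φ) : goodF (fun t => φ t / t) := by
  constructor
  · rw [contDiff_iff_contDiffAt]
    intro t
    by_cases ht : t = 0
    · have : (fun t => φ t / t) =ᶠ[nhds t] fun _ => 0 := by
        rw [ht]
        filter_upwards [Metric.ball_mem_nhds (0 : ℝ) one_pos] with s hs
        have : |s| < 1 := by simpa using hs
        rw [h.zero, zero_div]
        intro hs'
        exact absurd hs'.1 (not_le.2 this)
      exact contDiffAt_const.congr_of_eventuallyEq this
    · exact h.1.contDiffAt.div contDiffAt_id ht
  · intro t ht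
    apply h.2
    intro h0
    apply ht
    simp [h0]

lemma goodF.add {φ ψ : ℝ → ℝ} (h : goodF φ) (h' : goodF ψ) : goodF (fun t => φ t + ψ t) := by
  refine ⟨h.1.add h'.1, fun t ht => ?_⟩
  by_contra hne
  apply ht
  simp [h.zero hne, h'.zero hne]

lemma goodF.smul {φ : ℝ → ℝ} (h : goodF φ) (c : ℝ) : goodF (fun t => c * φ t) := by
  refine ⟨contDiff_const.mul h.1, fun t ht => ?_⟩
  by_contra hne
  apply ht
  simp [h.zero hne]

lemma goodF.hasDerivAt {φ : ℝ → ℝ} (h : goodF φ) (t : ℝ) :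
    HasDerivAt (fun t => (φ t : ℂ)) ((_root_.deriv φ t : ℝ) : ℂ) t :=
  ((h.1.differentiable (by simp)) t).hasDerivAt.ofReal_comp

lemma goodF.cont {φ : ℝ → ℝ} (h : goodF φ) : Continuous φ := h.1.continuous

/-- the kernel integral -/
noncomputable def KI (m : ℕ) (α β : ℝ) (φ : ℝ → ℝ) : ℂ :=
  ∫ t in (1/2 : ℝ)..3, (φ t : ℂ) * (Complex.exp (Complex.I * α * t) * (besselJ m (β * t) : ℂ))

lemma kern_contOn (m : ℕ) (α β : ℝ) (hβ : 0 < β) :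
    ContinuousOn (fun t : ℝ => Complex.exp (Complex.I * α * t) * (besselJ m (β * t) : ℂ))
      (Set.uIcc (1/2 : ℝ) 3) := by
  intro t ht
  rw [Set.uIcc_of_le (by norm_num)] at ht
  have ht0 : 0 < t := lt_of_lt_of_le (by norm_num) ht.1
  have h1 : ContinuousAt (fun t : ℝ => besselJ m (β * t)) t :=
    ContinuousAt.comp (f := fun t : ℝ => β * t) (besselJ_deriv m (β * t) (by positivity)).continuousAt (by fun_prop)
  have h2 : ContinuousAt (fun t : ℝ => (besselJ m (β * t) : ℂ)) t :=
    Complex.continuous_ofReal.continuousAt.comp h1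
  have h3 : ContinuousAt (fun t : ℝ => Complex.exp (Complex.I * α * t)) t := by fun_prop
  exact (h3.mul h2).continuousWithinAt

lemma KI_int (m : ℕ) (α β : ℝ) (hβ : 0 < β) {φ : ℝ → ℝ} (h : goodF φ) :
    IntervalIntegrable (fun t : ℝ => (φ t : ℂ) * (Complex.exp (Complex.I * α * t) * (besselJ m (β * t) : ℂ)))
      MeasureTheory.volume (1/2) 3 :=
  ((Complex.continuous_ofReal.comp h.cont).continuousOn.mul (kern_contOn m α β hβ)).intervalIntegrable

lemma KI_rec (m : ℕ) (α β : ℝ) (hβ : 0 < β) {φ q r p1 p2 : ℝ → ℝ} (h : goodF φ) (hq : goodF q)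
    (hp1 : goodF p1) (hp2 : goodF p2)
    (eq : q = fun t => φ t / t) (er : r = fun t => q t / t)
    (e1 : p1 = fun t => (m : ℝ) ^ 2 * r t + (-1 * deriv (deriv φ) t + deriv q t))
    (e2 : p2 = fun t => q t + (-2) * deriv φ t) :
    ((β : ℂ) ^ 2 - (α : ℂ) ^ 2) * KI m α β φ = KI m α β p1 + Complex.I * α * KI m α β p2 := by
  have hd : ∀ t ∈ Set.uIcc (1/2 : ℝ) 3, HasDerivAt (fun t : ℝ =>
      Complex.exp (Complex.I * α * t) * ((φ t : ℂ) * (β * (bJ1 m (β * t) : ℂ))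
        + ((q t : ℂ) - deriv φ t - Complex.I * α * φ t) * (besselJ m (β * t) : ℂ)))
      ((p1 t : ℂ) * (Complex.exp (Complex.I * α * t) * (besselJ m (β * t) : ℂ))
        + Complex.I * α * ((p2 t : ℂ) * (Complex.exp (Complex.I * α * t) * (besselJ m (β * t) : ℂ)))
        - ((β : ℂ) ^ 2 - (α : ℂ) ^ 2) * ((φ t : ℂ) * (Complex.exp (Complex.I * α * t) * (besselJ m (β * t) : ℂ)))) t := by
    intro t ht
    rw [Set.uIcc_of_le (by norm_num)] at ht
    have ht0 : 0 < t := lt_of_lt_of_le (by norm_num) ht.1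
    have hlin : HasDerivAt (fun t : ℝ => β * t) β t := by
      simpa using (hasDerivAt_id t).const_mul β
    have hJ : HasDerivAt (fun t : ℝ => (besselJ m (β * t) : ℂ)) (((bJ1 m (β * t)) * β : ℝ) : ℂ) t :=
      ((besselJ_deriv m (β * t) (by positivity)).comp t hlin).ofReal_comp
    have hJ1 : HasDerivAt (fun t : ℝ => (bJ1 m (β * t) : ℂ))
        (((-(bJ1 m (β * t)) / (β * t) - (1 - m ^ 2 / (β * t) ^ 2) * besselJ m (β * t)) * β : ℝ) : ℂ) t :=
      ((bJ1_deriv m (β * t) (by positivity)).comp t hlin).ofReal_comp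
    have hE : HasDerivAt (fun t : ℝ => Complex.exp (Complex.I * α * t))
        (Complex.exp (Complex.I * α * t) * (Complex.I * α)) t := by
      have : HasDerivAt (fun t : ℝ => Complex.I * α * (t : ℂ)) (Complex.I * α) t := by
        simpa using (hasDerivAt_id t).ofReal_comp.const_mul (Complex.I * (α : ℂ))
      exact this.cexp
    have hφ := h.hasDerivAt t
    have hφ' := h.deriv.hasDerivAt t
    have hq' := hq.hasDerivAt t
    have H := hE.mul ((hφ.mul (hJ1.const_mul (β : ℂ))).add
      (((hq'.sub hφ').sub (hφ.const_mul (Complex.I * (α : ℂ)))).mul hJ))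
    refine H.congr_deriv ?_
    have hI := Complex.I_sq
    have hφe : φ t = t ^ 2 * r t := by rw [er, eq]; field_simp
    have hqe : q t = t * r t := by rw [er]; field_simp
    have ht1 : (t : ℂ) ≠ 0 := by exact_mod_cast ht0.ne'
    have hb1 : (β : ℂ) ≠ 0 := by exact_mod_cast hβ.ne'
    simp only [e1, e2, hφe, hqe, Pi.add_apply, Pi.mul_apply, Pi.sub_apply]
    push_cast
    field_simp
    ring_nf
    try rw [hI]
    try ring_nf
  have hint : IntervalIntegrable (fun t : ℝ => ((p1 t : ℂ) * (Complex.exp (Complex.I * α * t) * (besselJ m (β * t) : ℂ))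
        + Complex.I * α * ((p2 t : ℂ) * (Complex.exp (Complex.I * α * t) * (besselJ m (β * t) : ℂ)))
        - ((β : ℂ) ^ 2 - (α : ℂ) ^ 2) * ((φ t : ℂ) * (Complex.exp (Complex.I * α * t) * (besselJ m (β * t) : ℂ)))))
      MeasureTheory.volume (1/2) 3 :=
    ((KI_int m α β hβ hp1).add ((KI_int m α β hβ hp2).const_mul _)).sub ((KI_int m α β hβ h).const_mul _)
  have key := intervalIntegral.integral_eq_sub_of_hasDerivAt hd hint
  rw [intervalIntegral.integral_sub ((KI_int m α β hβ hp1).add ((KI_int m α β hβ hp2).const_mul _))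
    ((KI_int m α β hβ h).const_mul _), intervalIntegral.integral_add (KI_int m α β hβ hp1)
    ((KI_int m α β hβ hp2).const_mul _), intervalIntegral.integral_const_mul,
    intervalIntegral.integral_const_mul, h.zero_half, h.zero_three, hq.zero_half, hq.zero_three,
    h.deriv.zero_half, h.deriv.zero_three] at key
  simp only [Complex.ofReal_zero, zero_mul, mul_zero, sub_zero, add_zero] at key
  unfold KI
  exact (sub_eq_zero.1 key).symm

lemma KI_bound (m : ℕ) (N : ℕ) : ∀ φ : ℝ → ℝ, goodF φ → ∃ C : ℝ, 0 ≤ C ∧ ∀ α β : ℝ, 0 < α → 1 ≤ β →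
    α ≠ β → ‖KI m α β φ‖ * |β - α| ^ N ≤ C := by
  induction N with
  | zero =>
    intro φ h
    obtain ⟨M, hM, hJ⟩ := besselJ_bound m
    obtain ⟨B, hB⟩ := (isCompact_Icc (a := (1/2 : ℝ)) (b := 3)).exists_bound_of_continuousOn h.cont.continuousOn
    have hB0 : 0 ≤ B := (norm_nonneg _).trans (hB 1 (by constructor <;> norm_num))
    refine ⟨B * M * |3 - 1/2|, by positivity, ?_⟩
    intro α β hα hβ _
    rw [pow_zero, mul_one]
    refine intervalIntegral.norm_integral_le_of_norm_le_const ?_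
    intro t ht
    rw [Set.uIoc_of_le (by norm_num)] at ht
    have hE : ‖Complex.exp (Complex.I * α * t)‖ = 1 := by
      have : Complex.I * α * t = ((α * t : ℝ) : ℂ) * Complex.I := by push_cast; ring
      rw [this, Complex.norm_exp_ofReal_mul_I]
    rw [norm_mul, norm_mul, hE, one_mul, Complex.norm_real, Complex.norm_real]
    have h1 := hB t ⟨ht.1.le, ht.2⟩
    have h2 := hJ (β * t) (by nlinarith [ht.1])
    rw [← Real.norm_eq_abs] at h2
    gcongr
  | succ N ih =>
    intro φ h
    have hp1 : goodF (fun t => (m : ℝ) ^ 2 * (φ t / t / t) + (-1 * deriv (deriv φ) t + deriv (fun t => φ t / t) t)) :=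
      (h.div.div.smul _).add ((h.deriv.deriv.smul _).add h.div.deriv)
    have hp2 : goodF (fun t => φ t / t + (-2) * deriv φ t) := h.div.add (h.deriv.smul _)
    obtain ⟨C1, hC1, H1⟩ := ih _ hp1
    obtain ⟨C2, hC2, H2⟩ := ih _ hp2
    refine ⟨C1 + C2, by positivity, ?_⟩
    intro α β hα hβ hne
    have hr := KI_rec m α β (by linarith) h h.div hp1 hp2 rfl rfl rfl rfl
    have h1 := H1 α β hα hβ hne
    have h2 := H2 α β hα hβ hne
    have hn := congrArg norm hr
    have hfac : ‖(β : ℂ) ^ 2 - (α : ℂ) ^ 2‖ = |β - α| * (β + α) := by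
      have : (β : ℂ) ^ 2 - (α : ℂ) ^ 2 = (((β - α) * (β + α) : ℝ) : ℂ) := by push_cast; ring
      rw [this, Complex.norm_real, norm_mul, Real.norm_eq_abs, Real.norm_of_nonneg (by linarith : 0 ≤ β + α)]
    rw [norm_mul, hfac] at hn
    set K1 := KI m α β (fun t => (m : ℝ) ^ 2 * (φ t / t / t) + (-1 * deriv (deriv φ) t + deriv (fun t => φ t / t) t))
    set K2 := KI m α β (fun t => φ t / t + (-2) * deriv φ t)
    have htri : ‖K1 + Complex.I * α * K2‖ ≤ ‖K1‖ + α * ‖K2‖ := by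
      refine (norm_add_le _ _).trans ?_
      rw [norm_mul, norm_mul, Complex.norm_I, one_mul, Complex.norm_real, Real.norm_of_nonneg hα.le]
    have hs : 0 < β + α := by linarith
    have hle : (β + α) * (‖KI m α β φ‖ * |β - α| ^ (N + 1)) ≤ (β + α) * (C1 + C2) := by
      calc (β + α) * (‖KI m α β φ‖ * |β - α| ^ (N + 1))
          = (|β - α| * (β + α) * ‖KI m α β φ‖) * |β - α| ^ N := by ring
        _ ≤ (‖K1‖ + α * ‖K2‖) * |β - α| ^ N := by rw [hn]; gcongr
        _ = ‖K1‖ * |β - α| ^ N + α * (‖K2‖ * |β - α| ^ N) := by ring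
        _ ≤ C1 + α * C2 := by gcongr
        _ ≤ (β + α) * (C1 + C2) := by nlinarith
    exact le_of_mul_le_mul_left hle hs

lemma Ik_eq (U : ℝ → ℝ) (hsupp : Function.support U ⊆ Set.Icc 1 2)
    (k : ℕ) (a b X : ℝ) (hX : 0 < X) :
    Ik U k a b X = (2 * X : ℝ) * KI (k - 1) (4 * Real.pi * a * Real.sqrt X) (4 * Real.pi * b * Real.sqrt X)
      (fun t => t * U (t ^ 2)) := by
  have hz : ∀ s, s ∉ Set.Icc (1 : ℝ) 2 → U s = 0 := fun s hs => by
    by_contra hne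
    exact hs (hsupp hne)
  set g : ℝ → ℂ := fun x => (U (x / X) : ℂ) * e (2 * a * Real.sqrt x) *
      (besselJ (k - 1) (4 * Real.pi * b * Real.sqrt x) : ℂ) with hg
  have h1 : Ik U k a b X = ∫ x in Set.Ioi (0 : ℝ), g x := rfl
  have h2 := MeasureTheory.integral_comp_mul_left_Ioi g 0 hX
  rw [mul_zero] at h2
  have h3 := MeasureTheory.integral_comp_rpow_Ioi_of_pos (g := fun s => g (X * s)) (p := 2) two_pos
  have h4 : ∫ x in Set.Ioi (0 : ℝ), g x = X • ∫ s in Set.Ioi (0 : ℝ), g (X * s) := by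
    rw [h2, smul_smul, mul_inv_cancel₀ hX.ne', one_smul]
  rw [h1, h4, ← h3]
  set F : ℝ → ℂ := fun t => ((t * U (t ^ 2) : ℝ) : ℂ) * (Complex.exp (Complex.I * (4 * Real.pi * a * Real.sqrt X : ℝ) * t)
    * (besselJ (k - 1) (4 * Real.pi * b * Real.sqrt X * t) : ℂ)) with hF
  have h5 : ∫ t in Set.Ioi (0 : ℝ), (2 * t ^ ((2 : ℝ) - 1)) • g (X * t ^ (2 : ℝ)) = ∫ t in Set.Ioi (0 : ℝ), 2 * F t := by
    apply MeasureTheory.setIntegral_congr_fun measurableSet_Ioi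
    intro t ht
    have ht0 : (0 : ℝ) < t := ht
    have s1 : t ^ ((2 : ℝ) - 1) = t := by norm_num
    have s2 : t ^ (2 : ℝ) = t ^ 2 := by norm_num
    have s3 : Real.sqrt (X * t ^ 2) = Real.sqrt X * t := by
      rw [Real.sqrt_mul hX.le, Real.sqrt_sq ht0.le]
    have s4 : X * t ^ 2 / X = t ^ 2 := by field_simp
    have s5 : 4 * Real.pi * b * (Real.sqrt X * t) = 4 * Real.pi * b * Real.sqrt X * t := by ring
    have s6 : 2 * (Real.pi : ℂ) * Complex.I * ((2 * a * (Real.sqrt X * t) : ℝ) : ℂ)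
      = Complex.I * (4 * Real.pi * a * Real.sqrt X : ℝ) * t := by push_cast; ring
    simp only [hg, hF, s1, s2, s3, s4, e, s5, s6, Complex.real_smul]
    push_cast
    ring
  rw [h5, MeasureTheory.integral_const_mul]
  have h6 : ∫ t in Set.Ioi (0 : ℝ), F t = ∫ t in Set.Ioc (1/2 : ℝ) 3, F t := by
    apply MeasureTheory.setIntegral_eq_of_subset_of_forall_sdiff_eq_zero measurableSet_Ioi
    · intro t ht
      exact lt_trans (by norm_num) ht.1
    · intro t ht
      have ht0 : (0 : ℝ) < t := ht.1
      have : U (t ^ 2) = 0 := by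
        apply hz
        intro h
        apply ht.2
        constructor
        · nlinarith [h.1]
        · nlinarith [h.2]
      simp [hF, this]
  rw [h6, KI, intervalIntegral.integral_of_le (by norm_num), Complex.real_smul]
  push_cast
  simp only [hF]
  push_cast
  ring

/-- Off-diagonal decay of the Bessel integral: for `k ≥ 1`, a fixed smooth `U`
supported in `[1,2]`, `ε > 0` and `A ≥ 0`, if `b²X > 1` and `|a−b|√X ≥ X^ε`
then `I_k(a,b;X) ≪ X^{−A}`. -/
theorem stmt6 (ε A : ℝ) (hε : 0 < ε) (hA : 0 ≤ A) (k : ℕ) (hk : 1 ≤ k)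
    (U : ℝ → ℝ) (hU : ContDiff ℝ (⊤ : ℕ∞) U) (hsupp : Function.support U ⊆ Set.Icc 1 2) :
    ∃ C : ℝ, 0 < C ∧
      ∀ a b X : ℝ, 0 < a → 0 < b → 1 < X → 1 < b ^ 2 * X →
        X ^ ε ≤ |a - b| * Real.sqrt X →
        ‖Ik U k a b X‖ ≤ C * X ^ (-A) := by
  have hgood : goodF (fun t => t * U (t ^ 2)) := by
    refine ⟨contDiff_id.mul (hU.comp (contDiff_id.pow 2)), fun t ht => ?_⟩
    have h1 : t ^ 2 ∈ Set.Icc (1 : ℝ) 2 := by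
      apply hsupp
      intro h0
      apply ht
      simp [h0]
    have h2 := sq_abs t
    have h3 := abs_nonneg t
    constructor
    · nlinarith [h1.1]
    · nlinarith [h1.2]
  obtain ⟨N, hN⟩ := exists_nat_ge ((A + 1) / ε)
  rw [div_le_iff₀ hε] at hN
  obtain ⟨C, hC, H⟩ := KI_bound (k - 1) N _ hgood
  refine ⟨2 * C + 1, by positivity, ?_⟩
  intro a b X ha hb hX hbX hab
  have hX0 : 0 < X := by linarith
  have hs : 0 < Real.sqrt X := Real.sqrt_pos.2 hX0
  have hpi := Real.pi_gt_three
  have hbs : 1 ≤ b * Real.sqrt X := by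
    have : (b * Real.sqrt X) ^ 2 = b ^ 2 * X := by rw [mul_pow, Real.sq_sqrt hX0.le]
    have h0 : 0 < b * Real.sqrt X := by positivity
    nlinarith
  have hXe : 0 < X ^ ε := Real.rpow_pos_of_pos hX0 _
  have hdiff : |4 * Real.pi * b * Real.sqrt X - 4 * Real.pi * a * Real.sqrt X|
      = 4 * Real.pi * (|a - b| * Real.sqrt X) := by
    have : 4 * Real.pi * b * Real.sqrt X - 4 * Real.pi * a * Real.sqrt X = (4 * Real.pi * Real.sqrt X) * (b - a) := by ring
    rw [this, abs_mul, abs_of_pos (by positivity), abs_sub_comm b a]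
    ring
  have hge : X ^ ε ≤ |4 * Real.pi * b * Real.sqrt X - 4 * Real.pi * a * Real.sqrt X| := by
    rw [hdiff]
    nlinarith
  have hK := H (4 * Real.pi * a * Real.sqrt X) (4 * Real.pi * b * Real.sqrt X) (by positivity)
    (by nlinarith) (by
      intro h
      rw [h, sub_self, abs_zero] at hge
      linarith)
  rw [Ik_eq U hsupp k a b X hX0, norm_mul, Complex.norm_real, Real.norm_of_nonneg (by positivity)]
  set K := ‖KI (k - 1) (4 * Real.pi * a * Real.sqrt X) (4 * Real.pi * b * Real.sqrt X) (fun t => t * U (t ^ 2))‖ with hKdef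
  have hK0 : 0 ≤ K := norm_nonneg _
  have hpow : X ^ (A + 1) ≤ |4 * Real.pi * b * Real.sqrt X - 4 * Real.pi * a * Real.sqrt X| ^ N := by
    calc X ^ (A + 1) ≤ X ^ (ε * N) := Real.rpow_le_rpow_of_exponent_le hX.le (by linarith)
      _ = (X ^ ε) ^ N := by rw [Real.rpow_mul hX0.le, Real.rpow_natCast]
      _ ≤ _ := by gcongr
  have hK1 : K * X ^ (A + 1) ≤ C := (mul_le_mul_of_nonneg_left hpow hK0).trans hK
  have hXA : X ^ (A + 1) = X ^ A * X := by rw [Real.rpow_add hX0, Real.rpow_one]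
  have hXp : 0 < X ^ A := Real.rpow_pos_of_pos hX0 _
  rw [Real.rpow_neg hX0.le, ← div_eq_mul_inv, le_div_iff₀ hXp]
  rw [hXA] at hK1
  nlinarith
end

section
/- Let ε > 0 and let x > N^ε > 1. Define W(λ) = e(−λ)·𝒦(√(λx), x) for λ ∈ (x/4, 4x). Then for every integer j ≥ 0 there is a constant C_j, depending only on j and U, such that |λ^j · W^{(j)}(λ)| ≤ C_j/√x for all λ ∈ (x/4, 4x). -/
/-- The oscillatory integral `𝒦(v,x) = ∫_0^∞ U(y) e(2v√y − xy) dy`. -/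
noncomputable def Kcal (U : ℝ → ℝ) (v x : ℝ) : ℂ :=
  ∫ y in Set.Ioi (0 : ℝ), (U y : ℂ) * e (2 * v * Real.sqrt y - x * y)

noncomputable def RR (E : ℕ → ℝ → ℂ) : ℕ → ℕ → ℝ → ℂ
  | 0, k, l => E k l
  | j+1, k, l => ((k:ℂ)/2 - j) * RR E j k l + (1/2) * RR E j (k+1) l

lemma RR_deriv (E : ℕ → ℝ → ℂ)
    (hE : ∀ k, ∀ l : ℝ, 0 < l → HasDerivAt (E k) (((k:ℂ) * E k l + E (k+1) l) / (2 * l)) l) (j : ℕ) :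
    ∀ k, ∀ l : ℝ, 0 < l →
      HasDerivAt (RR E j k) (((k:ℂ) * RR E j k l + RR E j (k+1) l) / (2 * l)) l := by
  induction j with
  | zero => intro k l hl; exact hE k l hl
  | succ j ih =>
    intro k l hl
    have h1 := ((ih k l hl).const_mul ((k:ℂ)/2 - j)).add ((ih (k+1) l hl).const_mul (1/2 : ℂ))
    have hl' : (l:ℂ) ≠ 0 := by exact_mod_cast hl.ne'
    refine h1.congr_deriv ?_
    simp only [RR]
    push_cast
    field_simp
    ring

lemma RR_iter (E : ℕ → ℝ → ℂ)
    (hE : ∀ k, ∀ l : ℝ, 0 < l → HasDerivAt (E k) (((k:ℂ) * E k l + E (k+1) l) / (2 * l)) l)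
    (f : ℝ → ℂ) (hf : ∀ l : ℝ, 0 < l → f l = E 0 l) (j : ℕ) :
    ∀ l : ℝ, 0 < l → (l:ℂ)^j * iteratedDeriv j f l = RR E j 0 l := by
  induction j with
  | zero => intro l hl; simp [RR, hf l hl]
  | succ j ih =>
    intro l hl
    have hl' : (l:ℂ) ≠ 0 := by exact_mod_cast hl.ne'
    have hev : iteratedDeriv j f =ᶠ[nhds l] fun l => RR E j 0 l / (l:ℂ)^j := by
      filter_upwards [lt_mem_nhds hl] with t ht
      have ht' : (t:ℂ) ≠ 0 := by exact_mod_cast ht.ne'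
      rw [← ih t ht]; field_simp
    have hd : HasDerivAt (fun l : ℝ => (l:ℂ)^j) ((j:ℂ) * (l:ℂ)^(j-1) * 1) l :=
      (Complex.ofRealCLM.hasDerivAt (x := l)).pow j
    have h2 := (RR_deriv E hE j 0 l hl).div hd (pow_ne_zero j hl')
    rw [iteratedDeriv_succ, hev.deriv_eq]
    have h3 := h2.deriv
    have h4 : deriv (fun l : ℝ => RR E j 0 l / (l:ℂ)^j) l = _ := h3
    rw [h4]
    simp only [RR]
    rcases j with _ | j
    · simp; field_simp
    · simp only [Nat.add_sub_cancel]
      push_cast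
      field_simp
      ring

lemma RR_bound (B : ℕ → ℝ) (j : ℕ) : ∀ k, ∃ C : ℝ, ∀ (E : ℕ → ℝ → ℂ) (s l : ℝ),
    (∀ k, ‖E k l‖ ≤ B k * s) → ‖RR E j k l‖ ≤ C * s := by
  induction j with
  | zero => intro k; exact ⟨B k, fun E s l h => h k⟩
  | succ j ih =>
    intro k
    obtain ⟨C1, h1⟩ := ih k
    obtain ⟨C2, h2⟩ := ih (k+1)
    refine ⟨‖(k:ℂ)/2 - j‖ * C1 + ‖(1/2:ℂ)‖ * C2, fun E s l h => ?_⟩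
    simp only [RR]
    refine (norm_add_le _ _).trans ?_
    rw [norm_mul, norm_mul, add_mul, mul_assoc, mul_assoc]
    gcongr
    · exact h1 E s l h
    · exact h2 E s l h

lemma e_deriv (f : ℝ → ℝ) (f' t : ℝ) (hf : HasDerivAt f f' t) :
    HasDerivAt (fun t => e (f t)) (e (f t) * (2 * (Real.pi : ℂ) * Complex.I * f')) t := by
  unfold e
  exact ((hf.ofReal_comp).const_mul _).cexp

lemma e_norm (t : ℝ) : ‖e t‖ = 1 := by
  unfold e
  rw [show 2 * (Real.pi : ℂ) * Complex.I * t = ((2 * Real.pi * t : ℝ) : ℂ) * Complex.I by push_cast; ring]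
  exact Complex.norm_exp_ofReal_mul_I _

lemma e_cont : Continuous e := by unfold e; fun_prop

lemma fres1 (w : ℝ) (hw : 1 ≤ w) : ‖∫ s in (1:ℝ)..w, e (-s^2)‖ ≤ 3 := by
  have hpos : ∀ s ∈ Set.uIcc 1 w, (0:ℝ) < s := by
    intro s hs; rw [Set.uIcc_of_le hw] at hs; linarith [hs.1]
  have hd : ∀ s ∈ Set.uIcc 1 w, HasDerivAt (fun s : ℝ => e (-s^2) * ((s⁻¹ : ℝ) : ℂ))
      ((-(4 * (Real.pi : ℂ) * Complex.I)) * e (-s^2) + (-1) * (e (-s^2) * (((s^2)⁻¹ : ℝ) : ℂ))) s := by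
    intro s hs
    have h0 := hpos s hs
    have h0' : (s:ℂ) ≠ 0 := by exact_mod_cast h0.ne'
    have h1 := e_deriv (fun s => -s^2) (-(2 * s)) s (by simpa using (hasDerivAt_pow 2 s).fun_neg)
    have h2 := h1.mul (hasDerivAt_inv h0.ne').ofReal_comp
    refine h2.congr_deriv ?_
    push_cast
    field_simp
    ring
  have hc : Continuous fun s : ℝ => e (-s^2) := e_cont.comp (by fun_prop)
  have hi1 : IntervalIntegrable (fun s : ℝ => e (-s^2)) MeasureTheory.volume 1 w :=
    hc.intervalIntegrable _ _
  have hci : ContinuousOn (fun s : ℝ => (s^2)⁻¹) (Set.uIcc 1 w) := by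
    apply ContinuousOn.inv₀ (by fun_prop)
    intro s hs; exact pow_ne_zero _ (hpos s hs).ne'
  have hi2 : IntervalIntegrable (fun s : ℝ => e (-s^2) * (((s^2)⁻¹ : ℝ) : ℂ)) MeasureTheory.volume 1 w := by
    apply ContinuousOn.intervalIntegrable
    exact hc.continuousOn.mul (Complex.continuous_ofReal.comp_continuousOn hci)
  have key := intervalIntegral.integral_eq_sub_of_hasDerivAt hd
    ((hi1.const_mul _).add (hi2.const_mul _))
  rw [intervalIntegral.integral_add (hi1.const_mul _) (hi2.const_mul _),
    intervalIntegral.integral_const_mul, intervalIntegral.integral_const_mul] at key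
  have hb : ‖∫ s in (1:ℝ)..w, e (-s^2) * (((s^2)⁻¹ : ℝ) : ℂ)‖ ≤ 1 := by
    have hr : ∫ s in (1:ℝ)..w, (s^2)⁻¹ = 1 - w⁻¹ := by
      rw [intervalIntegral.integral_eq_sub_of_hasDerivAt (f := fun s => -s⁻¹)]
      · simp; ring
      · intro s hs
        simpa using (hasDerivAt_inv (hpos s hs).ne').fun_neg
      · exact hci.intervalIntegrable
    have := intervalIntegral.norm_integral_le_of_norm_le (μ := MeasureTheory.volume) (a := 1) (b := w)
      (f := fun s : ℝ => e (-s^2) * (((s^2)⁻¹ : ℝ) : ℂ)) (g := fun s => (s^2)⁻¹) hw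
      (by
        refine Filter.Eventually.of_forall fun s _ => ?_
        rw [norm_mul, e_norm, one_mul, Complex.norm_real, Real.norm_of_nonneg (by positivity)])
      hci.intervalIntegrable
    rw [hr] at this
    have : 0 ≤ w⁻¹ := by positivity
    linarith
  set I := ∫ s in (1:ℝ)..w, e (-s^2)
  set J := ∫ s in (1:ℝ)..w, e (-s^2) * (((s^2)⁻¹ : ℝ) : ℂ)
  have h5 : (4 * (Real.pi : ℂ) * Complex.I) * I
      = e (-1^2) * (((1:ℝ)⁻¹ : ℝ) : ℂ) - e (-w^2) * ((w⁻¹ : ℝ) : ℂ) - J := by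
    linear_combination -key
  have h6 : ‖(4 * (Real.pi : ℂ) * Complex.I) * I‖ ≤ 1 + 1 + 1 := by
    rw [h5]
    refine (norm_sub_le _ _).trans (add_le_add ((norm_sub_le _ _).trans (add_le_add ?_ ?_)) hb)
    · rw [norm_mul, e_norm]; simp
    · rw [norm_mul, e_norm, one_mul, Complex.norm_real, Real.norm_of_nonneg (by positivity)]
      exact inv_le_one_of_one_le₀ hw
  have h7 : ‖(4 * (Real.pi : ℂ) * Complex.I) * I‖ = 4 * Real.pi * ‖I‖ := by
    simp [abs_of_pos Real.pi_pos]
  rw [h7] at h6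
  nlinarith [Real.pi_gt_three, norm_nonneg I]

lemma fres2 (w : ℝ) (hw : 0 ≤ w) : ‖∫ s in (0:ℝ)..w, e (-s^2)‖ ≤ 4 := by
  have hc : Continuous fun s : ℝ => e (-s^2) := e_cont.comp (by fun_prop)
  have h01 : ∀ v : ℝ, ‖∫ s in (0:ℝ)..v, e (-s^2)‖ ≤ 1 * |v - 0| := fun v =>
    intervalIntegral.norm_integral_le_of_norm_le_const fun s _ => (e_norm _).le
  rcases le_total w 1 with h | h
  · refine (h01 w).trans ?_
    rw [sub_zero, abs_of_nonneg hw]; linarith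
  · rw [← intervalIntegral.integral_add_adjacent_intervals (hc.intervalIntegrable 0 1) (hc.intervalIntegrable 1 w)]
    have := fres1 w h
    have h1 := h01 1
    norm_num at h1
    exact (norm_add_le _ _).trans (by linarith)

lemma fres3 (w : ℝ) : ‖∫ s in (0:ℝ)..w, e (-s^2)‖ ≤ 4 := by
  rcases le_total 0 w with h | h
  · exact fres2 w h
  · have := fres2 (-w) (by linarith)
    have h2 : ∫ s in (0:ℝ)..(-w), e (-s^2) = ∫ s in w..0, e (-s^2) := by
      have := intervalIntegral.integral_comp_neg (a := 0) (b := -w) (fun s => e (-s^2))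
      simpa using this
    rw [h2, intervalIntegral.integral_symm, norm_neg] at this
    exact this

lemma fres (x : ℝ) (hx : 0 < x) (w : ℝ) :
    ‖∫ s in (0:ℝ)..w, e (-x * s^2)‖ ≤ 4 / Real.sqrt x := by
  have h := intervalIntegral.integral_comp_mul_left (a := 0) (b := w) (c := Real.sqrt x) (fun s => e (-s^2))
    (Real.sqrt_pos.2 hx).ne'
  have h2 : ∀ s : ℝ, -(Real.sqrt x * s)^2 = -x * s^2 := fun s => by
    rw [mul_pow, Real.sq_sqrt hx.le]; ring
  simp only [h2] at h
  rw [h, mul_zero, norm_smul, norm_inv, Real.norm_of_nonneg (Real.sqrt_nonneg _), div_eq_inv_mul]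
  gcongr
  exact fres3 _

noncomputable def CV (f : ℝ → ℂ) (x m : ℝ) : ℂ := ∫ t, f t * e (-x * (m - t)^2)

lemma CV_deriv (f : ℝ → ℂ) (hf : ContDiff ℝ 1 f) (hc : HasCompactSupport f) (x m : ℝ) :
    HasDerivAt (CV f x) (CV (deriv f) x m) m := by
  have hg : Continuous fun s : ℝ => e (-x * s^2) := e_cont.comp (by fun_prop)
  exact hc.hasDerivAt_convolution_left (μ := MeasureTheory.volume) (ContinuousLinearMap.mul ℝ ℂ) hf
    (hg.locallyIntegrable) m

lemma CV_bound (f : ℝ → ℂ) (hf : ContDiff ℝ 1 f) (hc : HasCompactSupport f) (x m : ℝ) (hx : 0 < x) :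
    ‖CV f x m‖ ≤ (4 * ∫ t, ‖deriv f t‖) / Real.sqrt x := by
  have hg : Continuous fun s : ℝ => e (-x * s^2) := e_cont.comp (by fun_prop)
  set G : ℝ → ℂ := fun t => - ∫ s in (0:ℝ)..(m - t), e (-x * s^2) with hG
  have hGd : ∀ t, HasDerivAt G (e (-x * (m - t)^2)) t := by
    intro t
    have h1 := (hg.integral_hasStrictDerivAt 0 (m - t)).hasDerivAt
    have h2 := (h1.scomp t ((hasDerivAt_id t).const_sub m)).fun_neg
    simpa [hG] using h2
  have hGc : Continuous G := continuous_iff_continuousAt.2 fun t => (hGd t).continuousAt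
  have hdc : Continuous (deriv f) := hf.continuous_deriv le_rfl
  have hg' : Continuous fun t : ℝ => e (-x * (m - t)^2) := e_cont.comp (by fun_prop)
  have h := MeasureTheory.integral_mul_deriv_eq_deriv_mul_of_integrable (u := f) (v := G) (u' := deriv f)
    (v' := fun t => e (-x * (m - t)^2))
    (fun t _ => (hf.differentiable one_ne_zero t).hasDerivAt) (fun t _ => hGd t)
    ((hf.continuous.mul hg').integrable_of_hasCompactSupport hc.mul_right)
    ((hdc.mul hGc).integrable_of_hasCompactSupport hc.deriv.mul_right)
    ((hf.continuous.mul hGc).integrable_of_hasCompactSupport hc.mul_right)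
  unfold CV
  rw [h, norm_neg]
  have hint : MeasureTheory.Integrable (fun t => ‖deriv f t‖) :=
    (hdc.integrable_of_hasCompactSupport hc.deriv).norm
  refine (MeasureTheory.norm_integral_le_of_norm_le (hint.mul_const (4 / Real.sqrt x))
    (Filter.Eventually.of_forall fun t => ?_)).trans ?_
  · rw [norm_mul]
    gcongr
    simp only [hG, norm_neg]
    exact fres x hx _
  · rw [MeasureTheory.integral_mul_const]
    apply le_of_eq; ring

noncomputable def VV (U : ℝ → ℝ) (t : ℝ) : ℂ := if 0 < t then ((2 * t * U (t^2) : ℝ) : ℂ) else 0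

lemma VV_zero (U : ℝ → ℝ) (hsupp : Function.support U ⊆ Set.Icc 1 2) (t : ℝ) (ht : t ∉ Set.Icc (1:ℝ) 2) :
    VV U t = 0 := by
  unfold VV
  split_ifs with h
  · have : U (t^2) = 0 := by
      by_contra hne
      have := hsupp (Function.mem_support.2 hne)
      exact ht ⟨by nlinarith [this.1], by nlinarith [this.2]⟩
    simp [this]
  · rfl

lemma VV_supp (U : ℝ → ℝ) (hsupp : Function.support U ⊆ Set.Icc 1 2) : HasCompactSupport (VV U) :=
  HasCompactSupport.intro isCompact_Icc fun t ht => VV_zero U hsupp t ht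

lemma VV_smooth (U : ℝ → ℝ) (hU : ContDiff ℝ (⊤ : ℕ∞) U) (hsupp : Function.support U ⊆ Set.Icc 1 2) :
    ContDiff ℝ (⊤ : ℕ∞) (VV U) := by
  rw [contDiff_iff_contDiffAt]
  intro t
  rcases lt_or_ge t 1 with h | h
  · refine (contDiffAt_const (c := (0:ℂ))).congr_of_eventuallyEq ?_
    filter_upwards [gt_mem_nhds h] with s hs
    exact VV_zero U hsupp s fun h' => by linarith [h'.1]
  · have hs : ContDiff ℝ (⊤ : ℕ∞) fun t : ℝ => ((2 * t * U (t^2) : ℝ) : ℂ) :=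
      Complex.ofRealCLM.contDiff.comp
        ((contDiff_const.mul contDiff_id).mul (hU.comp (contDiff_id.pow 2)))
    refine hs.contDiffAt.congr_of_eventuallyEq ?_
    filter_upwards [lt_mem_nhds (show (0:ℝ) < t by linarith)] with s hs
    simp [VV, hs]

lemma W_eq (U : ℝ → ℝ) (x l : ℝ) (hx : 0 < x) (hl : 0 < l) :
    e (-l) * Kcal U (Real.sqrt (l * x)) x = CV (VV U) x (Real.sqrt (l / x)) := by
  unfold Kcal CV
  rw [← MeasureTheory.integral_comp_rpow_Ioi _ (two_ne_zero), ← MeasureTheory.integral_const_mul]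
  have h : ∀ t, VV U t * e (-x * (Real.sqrt (l/x) - t)^2)
      = Set.indicator (Set.Ioi 0) (fun t => ((2 * t * U (t^2) : ℝ) : ℂ) * e (-x * (Real.sqrt (l/x) - t)^2)) t := by
    intro t
    by_cases ht : 0 < t <;> simp [VV, ht]
  simp_rw [h]
  rw [MeasureTheory.integral_indicator measurableSet_Ioi]
  refine MeasureTheory.setIntegral_congr_fun measurableSet_Ioi fun t ht => ?_
  have ht : 0 < t := ht
  have h1 : e (-x * (Real.sqrt (l/x) - t)^2) =
      e (-l) * e (2 * Real.sqrt (l * x) * t - x * t^2) := by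
    unfold e
    rw [← Complex.exp_add]
    congr 1
    have a1 : Real.sqrt (l * x) = x * Real.sqrt (l / x) := by
      rw [show l * x = x^2 * (l / x) by field_simp, Real.sqrt_mul (by positivity), Real.sqrt_sq hx.le]
    have a2 : Real.sqrt (l/x)^2 = l / x := Real.sq_sqrt (by positivity)
    have a3 : l = x * Real.sqrt (l/x)^2 := by rw [a2]; field_simp
    rw [a1]
    generalize Real.sqrt (l/x) = m at *
    rw [a3]
    push_cast
    ring
  have h2 : (2:ℝ) - 1 = 1 := by norm_num
  simp only [Real.rpow_two, Real.sqrt_sq ht.le, h1, h2, Real.rpow_one, Complex.real_smul]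
  push_cast
  simp
  ring

noncomputable def EE (U : ℝ → ℝ) (x : ℝ) (k : ℕ) (l : ℝ) : ℂ :=
  ((Real.sqrt (l / x) : ℝ) : ℂ)^k * CV (iteratedDeriv k (VV U)) x (Real.sqrt (l / x))

lemma VVk (U : ℝ → ℝ) (hU : ContDiff ℝ (⊤ : ℕ∞) U) (hsupp : Function.support U ⊆ Set.Icc 1 2) (k : ℕ) :
    ContDiff ℝ (⊤ : ℕ∞) (iteratedDeriv k (VV U)) ∧ HasCompactSupport (iteratedDeriv k (VV U)) := by
  induction k with
  | zero => simpa using ⟨VV_smooth U hU hsupp, VV_supp U hsupp⟩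
  | succ k ih =>
    rw [iteratedDeriv_succ]
    exact ⟨(contDiff_infty_iff_deriv.1 ih.1).2, ih.2.deriv⟩

lemma EE_deriv (U : ℝ → ℝ) (hU : ContDiff ℝ (⊤ : ℕ∞) U) (hsupp : Function.support U ⊆ Set.Icc 1 2)
    (x : ℝ) (hx : 0 < x) (k : ℕ) (l : ℝ) (hl : 0 < l) :
    HasDerivAt (EE U x k) (((k:ℂ) * EE U x k l + EE U x (k+1) l) / (2 * l)) l := by
  have hV := VVk U hU hsupp k
  set m := Real.sqrt (l/x) with hm
  have hm0 : 0 < m := Real.sqrt_pos.2 (by positivity)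
  have hm2 : m^2 = l / x := Real.sq_sqrt (by positivity)
  have hs : HasDerivAt (fun l => Real.sqrt (l / x)) (m / (2 * l)) l := by
    have := ((hasDerivAt_id l).div_const x).sqrt (by simp; exact ⟨hl.ne', hx.ne'⟩)
    refine this.congr_deriv ?_
    simp only [id]
    rw [← hm]
    have : l = m^2 * x := by rw [hm2]; field_simp
    rw [this]; field_simp
  have h1 := HasDerivAt.scomp (h := fun l => Real.sqrt (l / x)) l
    (CV_deriv _ (hV.1.of_le (by exact_mod_cast le_top)) hV.2 x m) hs
  have h2 := (hs.ofReal_comp.pow k).mul h1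
  refine h2.congr_deriv ?_
  have hm' : (m:ℂ) ≠ 0 := by exact_mod_cast hm0.ne'
  have hl' : (l:ℂ) ≠ 0 := by exact_mod_cast hl.ne'
  simp only [EE, iteratedDeriv_succ, ← hm, Complex.real_smul, Pi.pow_apply]
  rcases k with _ | k
  · simp; field_simp
  · simp only [Nat.add_sub_cancel]
    simp only [Function.comp_apply, ← hm]
    push_cast
    field_simp
    ring

theorem stmt10 (U : ℝ → ℝ) (hU : ContDiff ℝ (⊤ : ℕ∞) U) (hsupp : Function.support U ⊆ Set.Icc 1 2)
    (j : ℕ) :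
    ∃ C : ℝ, 0 < C ∧
      ∀ ε N x : ℝ, 0 < ε → 1 < N ^ ε → N ^ ε < x →
        ∀ lam ∈ Set.Ioo (x / 4) (4 * x),
          lam ^ j * ‖iteratedDeriv j (fun l : ℝ => e (-l) * Kcal U (Real.sqrt (l * x)) x) lam‖
            ≤ C / Real.sqrt x := by
  obtain ⟨C, hC⟩ := RR_bound (fun k => 2^k * (4 * ∫ t, ‖deriv (iteratedDeriv k (VV U)) t‖)) j 0
  refine ⟨max C 1, by positivity, fun ε N x _ h1 h2 lam hlam => ?_⟩
  have hx : 0 < x := by linarith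
  have hl : 0 < lam := by linarith [hlam.1]
  have h := RR_iter (EE U x) (EE_deriv U hU hsupp x hx)
    (fun l : ℝ => e (-l) * Kcal U (Real.sqrt (l * x)) x)
    (fun l hl => by rw [W_eq U x l hx hl]; simp [EE]) j lam hl
  have hb := hC (EE U x) (1 / Real.sqrt x) lam (fun k => ?_)
  · rw [← h, norm_mul, norm_pow, Complex.norm_real, Real.norm_of_nonneg hl.le] at hb
    refine hb.trans ?_
    rw [mul_one_div]
    gcongr
    exact le_max_left _ _
  · have hV := VVk U hU hsupp k
    have := CV_bound _ (hV.1.of_le (by exact_mod_cast le_top)) hV.2 x (Real.sqrt (lam / x)) hx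
    unfold EE
    rw [norm_mul, norm_pow, Complex.norm_real, Real.norm_of_nonneg (Real.sqrt_nonneg _), mul_one_div, mul_div_assoc]
    gcongr
    rw [Real.sqrt_le_left (by norm_num), div_le_iff₀ hx]
    linarith [hlam.2]
end

section
/- Let ε > 0, let M ≥ 1 be an integer, and let c₀ > 0, c₂ > 0 be constants. Suppose: N, T, K, P > 1 with N^ε ≤ K ≤ T^{1−ε}, X = P²K²/N; V is smooth, supported in [1,2], with total variation Var(V) = ∫|V'| ≤ 1; φ : (1/2, 5/2) → ℝ is smooth with |φ''(x)| ≥ c₀ and |φ''(x)| ≤ c₂ for all x ∈ (1/2, 5/2); p is a prime with P ≤ p ≤ 2P; r is an integer; γ is real. Then there are constants C and T₀, depending only on ε, M, c₀, c₂ and U, such that for all T ≥ T₀ and all y with MX ≤ y ≤ 2MX, |𝒥(y,r,p)| ≤ C/√T. -/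
/-- The oscillatory integral
`𝒥(y,r,p) = ∫_0^∞ V(x) e(Tφ(x) + γNx + 2√(Nxy)/(√M p) − rNx/p) dx`. -/
noncomputable def Jcal (V : ℝ → ℂ) (φ : ℝ → ℝ) (M : ℕ) (N T γ : ℝ) (p : ℕ) (r : ℤ)
    (y : ℝ) : ℂ :=
  ∫ x in Set.Ioi (0 : ℝ),
    V x * e (T * φ x + γ * N * x + 2 * Real.sqrt (N * x * y) / (Real.sqrt M * p)
      - r * N * x / p)

lemma vdc_sq_one (σ : ℝ) : σ ^ 2 = 1 ↔ |σ| = 1 := by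
  rw [← sq_abs]
  constructor
  · intro h; nlinarith [abs_nonneg σ]
  · intro h; rw [h]; norm_num

lemma vdc_aux (a b s σ : ℝ) (hab : a ≤ b) (hs : 0 < s) (hσ : σ ^ 2 = 1) (f g h : ℝ → ℝ)
    (hf : ∀ x ∈ Set.Icc a b, HasDerivAt f (g x) x)
    (hg : ∀ x ∈ Set.Icc a b, HasDerivAt g (h x) x)
    (hh : ContinuousOn h (Set.Icc a b))
    (hl : ∀ x ∈ Set.Icc a b, s ^ 2 ≤ σ * h x) :
    ‖∫ x in a..b, Complex.exp (Complex.I * f x)‖ ≤ 8 / s := by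
  have hfc : ContinuousOn f (Set.Icc a b) := fun x hx => (hf x hx).continuousAt.continuousWithinAt
  have hgc : ContinuousOn g (Set.Icc a b) := fun x hx => (hg x hx).continuousAt.continuousWithinAt
  have hpos : ∀ x, 0 < g x ^ 2 + s ^ 2 := fun x => by positivity
  have hposC : ∀ x, ((g x : ℂ) ^ 2 + (s : ℂ) ^ 2) ≠ 0 := fun x => by
    exact_mod_cast (hpos x).ne'
  have hI : Set.uIcc a b = Set.Icc a b := Set.uIcc_of_le hab
  let q : ℝ → ℝ := fun x => g x / (g x ^ 2 + s ^ 2)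
  let q' : ℝ → ℝ := fun x => h x * (s ^ 2 - g x ^ 2) / (g x ^ 2 + s ^ 2) ^ 2
  let E : ℝ → ℂ := fun x => Complex.exp (Complex.I * f x)
  have hEn : ∀ x, ‖E x‖ = 1 := fun x => by
    simp only [E]; rw [mul_comm]; exact Complex.norm_exp_ofReal_mul_I _
  have hq : ∀ x ∈ Set.Icc a b, HasDerivAt q (q' x) x := fun x hx => by
    have := (hg x hx).div (((hg x hx).pow 2).add_const (s ^ 2)) (hpos x).ne'
    refine this.congr_deriv ?_
    simp only [q', Pi.pow_apply]
    congr 1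
    push_cast
    ring
  have hE : ∀ x ∈ Set.Icc a b, HasDerivAt E (E x * (Complex.I * g x)) x := fun x hx =>
    ((hf x hx).ofReal_comp.const_mul Complex.I).cexp
  have hEc : ContinuousOn E (Set.Icc a b) := fun x hx => (hE x hx).continuousAt.continuousWithinAt
  have hqc : ContinuousOn q (Set.Icc a b) := fun x hx => (hq x hx).continuousAt.continuousWithinAt
  have hq'c : ContinuousOn q' (Set.Icc a b) :=
    (hh.mul (continuousOn_const.sub (hgc.pow 2))).div ((hgc.pow 2).add continuousOn_const |>.pow 2)
      (fun x _ => (pow_pos (hpos x) 2).ne')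
  have cofR : ∀ {u : ℝ → ℝ}, ContinuousOn u (Set.Icc a b) →
      ContinuousOn (fun x => (u x : ℂ)) (Set.Icc a b) := fun hu =>
    Complex.continuous_ofReal.comp_continuousOn hu
  let H' : ℝ → ℂ := fun x => -Complex.I * (E x * (Complex.I * g x) * q x + E x * q' x)
  have hH'c : ContinuousOn H' (Set.Icc a b) :=
    continuousOn_const.mul (((hEc.mul (continuousOn_const.mul (cofR hgc))).mul (cofR hqc)).add
      (hEc.mul (cofR hq'c)))
  have hH : ∀ x ∈ Set.uIcc a b, HasDerivAt (fun x => -Complex.I * (E x * q x)) (H' x) x := by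
    rw [hI]; intro x hx
    exact ((hE x hx).mul (hq x hx).ofReal_comp).const_mul _
  have hiH : IntervalIntegrable H' MeasureTheory.volume a b :=
    ContinuousOn.intervalIntegrable (by rwa [hI])
  have hiE : IntervalIntegrable E MeasureTheory.volume a b :=
    ContinuousOn.intervalIntegrable (by rwa [hI])
  have h1 := intervalIntegral.integral_eq_sub_of_hasDerivAt hH hiH
  let B' : ℝ → ℝ := fun x => 2 * (σ * h x / (g x ^ 2 + s ^ 2))
  have hB'c : ContinuousOn B' (Set.Icc a b) :=
    continuousOn_const.mul ((continuousOn_const.mul hh).div ((hgc.pow 2).add continuousOn_const)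
      (fun x _ => (hpos x).ne'))
  have hiB : IntervalIntegrable B' MeasureTheory.volume a b :=
    ContinuousOn.intervalIntegrable (by rwa [hI])
  have hB : ∀ x ∈ Set.uIcc a b,
      HasDerivAt (fun x => 2 * (Real.arctan (σ * g x / s) / s)) (B' x) x := by
    rw [hI]; intro x hx
    have := ((((hg x hx).const_mul σ).div_const s).arctan.div_const s).const_mul 2
    refine this.congr_deriv ?_
    simp only [B']
    have e1 : 1 + (σ * g x / s) ^ 2 = (g x ^ 2 + s ^ 2) / s ^ 2 := by
      rw [div_pow, mul_pow, hσ]; field_simp; ring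
    rw [e1]
    have := (hpos x).ne'
    field_simp
  have h2 := intervalIntegral.integral_eq_sub_of_hasDerivAt hB hiB
  have hbd : ∀ x ∈ Set.Icc a b, ‖E x - H' x‖ ≤ B' x := by
    intro x hx
    have e1 : E x - H' x = E x * (((s ^ 2 / (g x ^ 2 + s ^ 2) : ℝ) : ℂ) + Complex.I * q' x) := by
      have e2 : (1 : ℂ) - g x * q x = ((s ^ 2 / (g x ^ 2 + s ^ 2) : ℝ) : ℂ) := by
        have : 1 - g x * q x = s ^ 2 / (g x ^ 2 + s ^ 2) := by
          simp only [q]; have := (hpos x).ne'; field_simp; ring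
        exact_mod_cast this
      rw [← e2]
      simp only [H']
      linear_combination (-E x * g x * q x) * -Complex.I_sq
    rw [e1, norm_mul, hEn, one_mul]
    have hσh : σ * h x = |h x| := by
      have h0 : 0 ≤ σ * h x := (by positivity : 0 ≤ s ^ 2).trans (hl x hx)
      rw [← abs_of_nonneg h0, abs_mul, (vdc_sq_one σ).1 hσ, one_mul]
    have hln := hl x hx
    have p := hpos x
    have b1 : ‖((s ^ 2 / (g x ^ 2 + s ^ 2) : ℝ) : ℂ)‖ ≤ σ * h x / (g x ^ 2 + s ^ 2) := by
      rw [Complex.norm_real, Real.norm_of_nonneg (by positivity)]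
      gcongr
    have b2 : ‖Complex.I * (q' x : ℂ)‖ ≤ σ * h x / (g x ^ 2 + s ^ 2) := by
      rw [norm_mul, Complex.norm_I, one_mul, Complex.norm_real, Real.norm_eq_abs, hσh]
      simp only [q']
      rw [abs_div, abs_mul, abs_of_pos (pow_pos p 2), div_le_div_iff₀ (pow_pos p 2) p]
      have : |s ^ 2 - g x ^ 2| ≤ g x ^ 2 + s ^ 2 := by
        rw [abs_le]; constructor <;> nlinarith [sq_nonneg s, sq_nonneg (g x)]
      calc |h x| * |s ^ 2 - g x ^ 2| * (g x ^ 2 + s ^ 2)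
          ≤ |h x| * (g x ^ 2 + s ^ 2) * (g x ^ 2 + s ^ 2) := by gcongr
        _ = _ := by ring
    calc _ ≤ _ := norm_add_le _ _
      _ ≤ _ := add_le_add b1 b2
      _ = B' x := by simp only [B']; ring
  have h3 : ‖∫ x in a..b, (E x - H' x)‖ ≤ ∫ x in a..b, B' x := by
    refine intervalIntegral.norm_integral_le_of_norm_le hab ?_ hiB
    exact Filter.Eventually.of_forall fun x hx => hbd x (Set.Ioc_subset_Icc_self hx)
  rw [intervalIntegral.integral_sub hiE hiH, h1, h2] at h3
  have hq1 : ∀ x, ‖-Complex.I * (E x * q x)‖ ≤ 1 / (2 * s) := by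
    intro x
    rw [norm_mul, norm_mul, hEn, norm_neg, Complex.norm_I, one_mul, one_mul, Complex.norm_real,
      Real.norm_eq_abs]
    simp only [q]
    rw [abs_div, abs_of_pos (hpos x), div_le_div_iff₀ (hpos x) (by positivity)]
    rw [← sq_abs (g x)]
    nlinarith [sq_nonneg (|g x| - s)]
  have ha1 := Real.arctan_lt_pi_div_two (σ * g b / s)
  have ha2 := Real.neg_pi_div_two_lt_arctan (σ * g a / s)
  have hpi := Real.pi_lt_d2
  have h4 : 2 * (Real.arctan (σ * g b / s) / s) - 2 * (Real.arctan (σ * g a / s) / s) ≤ 7 / s := by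
    have : 2 * (Real.arctan (σ * g b / s) / s) - 2 * (Real.arctan (σ * g a / s) / s)
      = (2 * (Real.arctan (σ * g b / s) - Real.arctan (σ * g a / s))) / s := by ring
    rw [this]
    gcongr
    linarith
  set Ha := -Complex.I * (E a * q a)
  set Hb := -Complex.I * (E b * q b)
  have h5 : ‖∫ x in a..b, E x‖ ≤ ‖(∫ x in a..b, E x) - (Hb - Ha)‖ + (‖Hb‖ + ‖Ha‖) := by
    have := norm_add_le ((∫ x in a..b, E x) - (Hb - Ha)) (Hb - Ha)
    rw [sub_add_cancel] at this
    linarith [norm_sub_le Hb Ha]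
  have h6 : 7 / s + (1 / (2 * s) + 1 / (2 * s)) = 8 / s := by field_simp; norm_num
  calc _ ≤ _ := h5
    _ ≤ 7 / s + (1 / (2 * s) + 1 / (2 * s)) := by
      have := hq1 a; have := hq1 b
      gcongr
      · exact h3.trans h4
    _ = _ := h6

/-- weighted version -/
lemma vdc_weight (s σ : ℝ) (hs : 0 < s) (hσ : σ ^ 2 = 1) (f g h : ℝ → ℝ) (V : ℝ → ℂ)
    (hf : ∀ x ∈ Set.Ioo (1 / 2 : ℝ) (5 / 2), HasDerivAt f (g x) x)
    (hg : ∀ x ∈ Set.Ioo (1 / 2 : ℝ) (5 / 2), HasDerivAt g (h x) x)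
    (hh : ContinuousOn h (Set.Icc 1 2))
    (hl : ∀ x ∈ Set.Icc (1 : ℝ) 2, s ^ 2 ≤ σ * h x)
    (hV : ContDiff ℝ (⊤ : ℕ∞) V) (hsupp : Function.support V ⊆ Set.Icc 1 2)
    (hvar : (∫ x in (1 / 2 : ℝ)..(5 / 2), ‖deriv V x‖) ≤ 1) :
    ‖∫ x in Set.Ioi (0 : ℝ), V x * Complex.exp (Complex.I * f x)‖ ≤ 8 / s := by
  have hsub : Set.Icc (1 : ℝ) 2 ⊆ Set.Ioo (1 / 2 : ℝ) (5 / 2) := fun x hx =>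
    ⟨by linarith [hx.1], by linarith [hx.2]⟩
  have hVc : Continuous V := hV.continuous
  have hV0 : ∀ x, x ∉ Set.Icc (1 : ℝ) 2 → V x = 0 := fun x hx => by
    by_contra hne; exact hx (hsupp hne)
  have hV1 : V 1 = 0 := by
    have : IsClosed {x : ℝ | V x = 0} := isClosed_eq hVc continuous_const
    have h1 : closure (Set.Iio (1 : ℝ)) ⊆ {x : ℝ | V x = 0} :=
      closure_minimal (fun x hx => hV0 x (fun h => absurd h.1 (not_le.2 hx))) this
    rw [closure_Iio] at h1
    exact h1 (Set.mem_Iic.2 le_rfl)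
  have hV2 : V 2 = 0 := by
    have : IsClosed {x : ℝ | V x = 0} := isClosed_eq hVc continuous_const
    have h1 : closure (Set.Ioi (2 : ℝ)) ⊆ {x : ℝ | V x = 0} :=
      closure_minimal (fun x hx => hV0 x (fun h => absurd h.2 (not_le.2 hx))) this
    rw [closure_Ioi] at h1
    exact h1 (Set.mem_Ici.2 le_rfl)
  let E : ℝ → ℂ := fun x => Complex.exp (Complex.I * f x)
  have hEc : ContinuousOn E (Set.Ioo (1 / 2 : ℝ) (5 / 2)) := fun x hx =>
    (((hf x hx).ofReal_comp.const_mul Complex.I).cexp).continuousAt.continuousWithinAt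
  have e1 : ∫ x in Set.Ioi (0 : ℝ), V x * E x = ∫ x in (1 : ℝ)..2, V x * E x := by
    rw [intervalIntegral.integral_of_le (by norm_num)]
    apply MeasureTheory.setIntegral_eq_of_subset_of_forall_sdiff_eq_zero measurableSet_Ioi
    · intro x hx; exact lt_trans zero_lt_one hx.1
    · intro x hx
      by_cases hx1 : x = 1
      · rw [hx1, hV1, zero_mul]
      · rw [hV0 x, zero_mul]
        intro h'
        exact hx.2 ⟨lt_of_le_of_ne h'.1 (Ne.symm hx1), h'.2⟩
  have hI : Set.uIcc (1 : ℝ) 2 = Set.Icc 1 2 := Set.uIcc_of_le (by norm_num)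
  let G : ℝ → ℂ := fun x => ∫ t in (1 : ℝ)..x, E t
  have hsub' : ∀ x ∈ Set.Icc (1 : ℝ) 2, Set.uIcc 1 x ⊆ Set.Ioo (1 / 2 : ℝ) (5 / 2) := by
    intro x hx
    rw [Set.uIcc_of_le hx.1]
    exact (Set.Icc_subset_Icc_right hx.2).trans hsub
  have hG : ∀ x ∈ Set.uIcc (1 : ℝ) 2, HasDerivAt G (E x) x := by
    rw [hI]; intro x hx
    refine intervalIntegral.integral_hasDerivAt_right ?_ ?_ ?_
    · exact (hEc.mono (hsub' x hx)).intervalIntegrable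
    · exact hEc.stronglyMeasurableAtFilter isOpen_Ioo x (hsub hx)
    · exact hEc.continuousAt (isOpen_Ioo.mem_nhds (hsub hx))
  have hV' : Continuous (deriv V) := hV.continuous_deriv (by simp)
  have hVd : ∀ x ∈ Set.uIcc (1 : ℝ) 2, HasDerivAt V (deriv V x) x := fun x _ =>
    ((hV.differentiable (by simp)) x).hasDerivAt
  have hparts := intervalIntegral.integral_mul_deriv_eq_deriv_mul hVd hG
    (hV'.intervalIntegrable _ _) ((hEc.mono (hI ▸ hsub)).intervalIntegrable)
  have hGb : ∀ x ∈ Set.Icc (1 : ℝ) 2, ‖G x‖ ≤ 8 / s := by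
    intro x hx
    have hs' : Set.Icc 1 x ⊆ Set.Icc (1 : ℝ) 2 := Set.Icc_subset_Icc_right hx.2
    exact vdc_aux 1 x s σ hx.1 hs hσ f g h (fun t ht => hf t (hsub (hs' ht)))
      (fun t ht => hg t (hsub (hs' ht))) (hh.mono hs') (fun t ht => hl t (hs' ht))
  change ‖∫ x in Set.Ioi (0 : ℝ), V x * E x‖ ≤ 8 / s
  rw [e1, hparts, hV1, hV2, zero_mul, zero_mul, sub_zero, zero_sub, norm_neg]
  have hi : ∀ a b : ℝ, IntervalIntegrable (fun x => ‖deriv V x‖) MeasureTheory.volume a b :=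
    fun a b => hV'.norm.intervalIntegrable _ _
  have b1 : ‖∫ x in (1 : ℝ)..2, deriv V x * G x‖ ≤ ∫ x in (1 : ℝ)..2, 8 / s * ‖deriv V x‖ := by
    refine intervalIntegral.norm_integral_le_of_norm_le (by norm_num) ?_ ((hi 1 2).const_mul _)
    refine Filter.Eventually.of_forall fun x hx => ?_
    rw [norm_mul, mul_comm]
    gcongr
    exact hGb x (Set.Ioc_subset_Icc_self hx)
  have b2 : ∫ x in (1 : ℝ)..2, ‖deriv V x‖ ≤ ∫ x in (1 / 2 : ℝ)..(5 / 2), ‖deriv V x‖ :=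
    intervalIntegral.integral_mono_interval (by norm_num) (by norm_num) (by norm_num)
      (Filter.Eventually.of_forall fun x => norm_nonneg _) (hi _ _)
  rw [intervalIntegral.integral_const_mul] at b1
  calc _ ≤ _ := b1
    _ ≤ 8 / s * 1 := by gcongr; exact b2.trans hvar
    _ = _ := mul_one _

/-- Second-derivative bound for `𝒥`: under `N^ε ≤ K ≤ T^{1−ε}`, `X = P²K²/N`,
`Var(V) ≤ 1`, `c₀ ≤ |φ''| ≤ c₂` on `(1/2,5/2)`, `p ∈ [P,2P]` prime and
`MX ≤ y ≤ 2MX`, one has `𝒥(y,r,p) ≪ 1/√T` for `T ≥ T₀`, with `C, T₀`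
depending only on `ε, M, c₀, c₂`. -/
theorem stmt12 (ε : ℝ) (hε : 0 < ε) (M : ℕ) (hM : 1 ≤ M) (c₀ c₂ : ℝ)
    (hc₀ : 0 < c₀) (hc₂ : 0 < c₂) :
    ∃ C T₀ : ℝ, 0 < C ∧ 0 < T₀ ∧
      ∀ (N T K P X γ : ℝ) (V : ℝ → ℂ) (φ : ℝ → ℝ) (p : ℕ) (r : ℤ) (y : ℝ),
        1 < N → 1 < T → 1 < K → 1 < P → T₀ ≤ T → X = P ^ 2 * K ^ 2 / N →
        N ^ ε ≤ K → K ≤ T ^ (1 - ε) →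
        ContDiff ℝ (⊤ : ℕ∞) V → Function.support V ⊆ Set.Icc 1 2 →
        (∫ x in (1 / 2 : ℝ)..(5 / 2), ‖deriv V x‖) ≤ 1 →
        ContDiffOn ℝ (⊤ : ℕ∞) φ (Set.Ioo (1 / 2) (5 / 2)) →
        (∀ x ∈ Set.Ioo ((1 : ℝ) / 2) (5 / 2),
          c₀ ≤ |iteratedDerivWithin 2 φ (Set.Ioo (1 / 2) (5 / 2)) x| ∧
          |iteratedDerivWithin 2 φ (Set.Ioo (1 / 2) (5 / 2)) x| ≤ c₂) →
        Nat.Prime p → P ≤ (p : ℝ) → (p : ℝ) ≤ 2 * P →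
        (M : ℝ) * X ≤ y → y ≤ 2 * ((M : ℝ) * X) →
        ‖Jcal V φ M N T γ p r y‖ ≤ C / Real.sqrt T := by
  refine ⟨8 / Real.sqrt c₀, max 1 ((2 / c₀) ^ (1 / ε)), by positivity, by positivity, ?_⟩
  intro N T K P X γ V φ p r y hN hT hK hP hT0 hX hNK hKT hV hsupp hvar hφ hφ2 hp hPp hpP hy1 hy2
  have hT' : 0 < T := by linarith
  have hp0 : (0 : ℝ) < p := by linarith
  have hM0 : (0 : ℝ) < M := by exact_mod_cast hM
  have hK0 : 0 < K := by linarith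
  have hP0 : 0 < P := by linarith
  have hN0 : 0 < N := by linarith
  have hX0 : 0 < X := by rw [hX]; positivity
  have hy0 : 0 < y := lt_of_lt_of_le (by positivity) hy1
  -- size of K
  have hKc : K ≤ c₀ / 2 * T := by
    have h1 : 2 / c₀ ≤ T ^ ε := by
      have h2 : (2 / c₀) ^ (1 / ε) ≤ T := (le_max_right _ _).trans hT0
      have h3 := Real.rpow_le_rpow (by positivity) h2 hε.le
      rwa [← Real.rpow_mul (by positivity), one_div, inv_mul_cancel₀ hε.ne', Real.rpow_one] at h3
    have h2 : T ^ (1 - ε) * T ^ ε = T := by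
      rw [← Real.rpow_add hT']; simp
    have h3 : 0 < T ^ (1 - ε) := Real.rpow_pos_of_pos hT' _
    have h4 : T ^ (1 - ε) * (2 / c₀) ≤ T := by
      calc _ ≤ T ^ (1 - ε) * T ^ ε := by gcongr
        _ = T := h2
    have h5 : K * (2 / c₀) ≤ T := le_trans (by gcongr) h4
    rw [← mul_div_assoc, div_le_iff₀ hc₀] at h5
    linarith
  obtain ⟨A, hA⟩ : ∃ A, A = 2 * Real.sqrt (N * y) / (Real.sqrt M * p) := ⟨_, rfl⟩
  have hsM : 0 < Real.sqrt M := Real.sqrt_pos.2 hM0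
  have hA0 : 0 ≤ A := by rw [hA]; positivity
  have hA4 : A ≤ 4 * K := by
    have h1 : N * y ≤ (2 * (Real.sqrt M * p * K)) ^ 2 := by
      have e1 : (2 * (Real.sqrt M * p * K)) ^ 2 = 4 * M * (p ^ 2 * K ^ 2) := by
        have := Real.sq_sqrt hM0.le
        calc _ = 4 * (Real.sqrt M ^ 2) * (p ^ 2 * K ^ 2) := by ring
          _ = _ := by rw [this]
      have e2 : N * y ≤ 2 * M * (P ^ 2 * K ^ 2) := by
        have : N * X = P ^ 2 * K ^ 2 := by rw [hX]; field_simp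
        calc N * y ≤ N * (2 * (M * X)) := by gcongr
          _ = 2 * M * (N * X) := by ring
          _ = _ := by rw [this]
      have e3 : P ^ 2 * K ^ 2 ≤ (p : ℝ) ^ 2 * K ^ 2 := by gcongr
      rw [e1]
      calc _ ≤ _ := e2
        _ ≤ 4 * M * (p ^ 2 * K ^ 2) := by gcongr; norm_num
    have h2 : Real.sqrt (N * y) ≤ 2 * (Real.sqrt M * p * K) :=
      Real.sqrt_le_iff.2 ⟨by positivity, h1⟩
    rw [hA, div_le_iff₀ (by positivity)]
    linarith
  -- derivatives of φ
  set S := Set.Ioo (1 / 2 : ℝ) (5 / 2) with hS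
  have hSo : IsOpen S := isOpen_Ioo
  have hφ1 : ContDiffOn ℝ (⊤ : ℕ∞) (deriv φ) S :=
    ((contDiffOn_infty_iff_deriv_of_isOpen hSo).1 hφ).2
  have hφ3 : ContDiffOn ℝ (⊤ : ℕ∞) (deriv (deriv φ)) S :=
    ((contDiffOn_infty_iff_deriv_of_isOpen hSo).1 hφ1).2
  have hd1 : ∀ x ∈ S, HasDerivAt φ (deriv φ x) x := fun x hx =>
    (((contDiffOn_infty_iff_deriv_of_isOpen hSo).1 hφ).1.differentiableAt
      (hSo.mem_nhds hx)).hasDerivAt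
  have hd2 : ∀ x ∈ S, HasDerivAt (deriv φ) (deriv (deriv φ) x) x := fun x hx =>
    (((contDiffOn_infty_iff_deriv_of_isOpen hSo).1 hφ1).1.differentiableAt
      (hSo.mem_nhds hx)).hasDerivAt
  have hit : ∀ x ∈ S, iteratedDerivWithin 2 φ S x = deriv (deriv φ) x := fun x hx => by
    rw [iteratedDerivWithin_of_isOpen hSo hx, iteratedDeriv_succ, iteratedDeriv_one]
  have hlow : ∀ x ∈ S, c₀ ≤ |deriv (deriv φ) x| := fun x hx => by
    rw [← hit x hx]; exact (hφ2 x hx).1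
  -- constant sign
  obtain ⟨σ, hσ, hsgn⟩ : ∃ σ : ℝ, σ ^ 2 = 1 ∧ ∀ x ∈ S, c₀ ≤ σ * deriv (deriv φ) x := by
    have hne : ∀ x ∈ S, deriv (deriv φ) x ≠ 0 := fun x hx h0 => by
      have := hlow x hx; rw [h0, abs_zero] at this; linarith
    have hpc : IsPreconnected S := isPreconnected_Ioo
    by_cases hex : ∃ x ∈ S, 0 < deriv (deriv φ) x
    · refine ⟨1, by norm_num, fun x hx => ?_⟩
      obtain ⟨x₀, hx₀, hpos⟩ := hex
      have : 0 < deriv (deriv φ) x := by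
        by_contra hneg
        obtain ⟨z, hz, hz0⟩ := hpc.intermediate_value hx hx₀ hφ3.continuousOn
          ⟨not_lt.1 hneg, hpos.le⟩
        exact hne z hz hz0
      rw [one_mul, ← abs_of_pos this]; exact hlow x hx
    · refine ⟨-1, by norm_num, fun x hx => ?_⟩
      push Not at hex
      have := hlow x hx
      rw [abs_of_nonpos (hex x hx)] at this
      linarith
  have hσa := (vdc_sq_one σ).1 hσ
  have hpi := Real.pi_gt_three
  have key := vdc_weight (Real.sqrt (c₀ * T)) σ (by positivity) hσ
    (fun x => 2 * Real.pi * (T * φ x + γ * N * x + A * Real.sqrt x - r * N / p * x))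
    (fun x => 2 * Real.pi * (T * deriv φ x + γ * N * 1 + A * (1 / (2 * Real.sqrt x))
      - r * N / p * 1))
    (fun x => 2 * Real.pi * (T * deriv (deriv φ) x - A * (1 / (4 * (x * Real.sqrt x))))) V
    ?_ ?_ ?_ ?_ hV hsupp hvar
  · have hJ : Jcal V φ M N T γ p r y = ∫ x in Set.Ioi (0 : ℝ), V x * Complex.exp (Complex.I *
        ((2 * Real.pi * (T * φ x + γ * N * x + A * Real.sqrt x - r * N / p * x) : ℝ) : ℂ)) := by
      unfold Jcal
      refine MeasureTheory.setIntegral_congr_fun measurableSet_Ioi fun x hx => ?_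
      have hx0 : (0 : ℝ) < x := hx
      have e1 : T * φ x + γ * N * x + 2 * Real.sqrt (N * x * y) / (Real.sqrt M * p)
          - r * N * x / p = T * φ x + γ * N * x + A * Real.sqrt x - r * N / p * x := by
        have : N * x * y = (N * y) * x := by ring
        rw [this, Real.sqrt_mul (by positivity), hA]
        ring
      simp only [e1, e]
      congr 2
      push_cast
      ring
    rw [hJ]
    refine key.trans (le_of_eq ?_)
    rw [Real.sqrt_mul hc₀.le, div_div]
  · intro x hx
    have hx0 : 0 < x := by linarith [hx.1]
    exact (((((hd1 x hx).const_mul T).add ((hasDerivAt_id x).const_mul (γ * N))).add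
      ((Real.hasDerivAt_sqrt hx0.ne').const_mul A)).sub
      ((hasDerivAt_id x).const_mul (r * N / p))).const_mul (2 * Real.pi)
  · intro x hx
    have hx0 : 0 < x := by linarith [hx.1]
    have hsx : 0 < Real.sqrt x := Real.sqrt_pos.2 hx0
    have h1 : HasDerivAt (fun x => 1 / (2 * Real.sqrt x)) (-(1 / (4 * (x * Real.sqrt x)))) x := by
      have := ((Real.hasDerivAt_sqrt hx0.ne').const_mul 2).inv (by positivity)
      simp only [one_div]
      refine this.congr_deriv ?_
      have hq := Real.sq_sqrt hx0.le
      rw [mul_pow, hq]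
      field_simp
      norm_num
    refine (((((hd2 x hx).const_mul T).add_const (γ * N * 1)).add
      (h1.const_mul A)).sub_const (r * N / p * 1)).const_mul (2 * Real.pi) |>.congr_deriv ?_
    ring
  · have hsub : Set.Icc (1 : ℝ) 2 ⊆ S := fun x hx => ⟨by linarith [hx.1], by linarith [hx.2]⟩
    have hc := hφ3.continuousOn.mono hsub
    have hc2 : ContinuousOn (fun x : ℝ => 1 / (4 * (x * Real.sqrt x))) (Set.Icc 1 2) := by
      refine continuousOn_const.div (by fun_prop) fun x hx => ?_
      have hx0 : 0 < x := by linarith [hx.1]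
      have hsx : 0 < Real.sqrt x := Real.sqrt_pos.2 hx0
      positivity
    exact continuousOn_const.mul ((continuousOn_const.mul hc).sub (continuousOn_const.mul hc2))
  · intro x hx
    have hxS : x ∈ S := ⟨by linarith [hx.1], by linarith [hx.2]⟩
    have hs1 : 1 ≤ Real.sqrt x := Real.one_le_sqrt.2 hx.1
    have hx1 : 1 ≤ x * Real.sqrt x := by nlinarith [hx.1]
    rw [Real.sq_sqrt (by positivity)]
    obtain ⟨B, hB⟩ : ∃ B, B = A * (1 / (4 * (x * Real.sqrt x))) := ⟨_, rfl⟩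
    have hB0 : 0 ≤ B := by rw [hB]; positivity
    have hBK : B ≤ K := by
      rw [hB, mul_one_div, div_le_iff₀ (by positivity)]
      nlinarith
    have hσB : σ * B ≤ K := by
      calc σ * B ≤ |σ| * B := by gcongr; exact le_abs_self σ
        _ = B := by rw [hσa, one_mul]
        _ ≤ K := hBK
    have h1 : c₀ * T ≤ σ * deriv (deriv φ) x * T := by gcongr; exact hsgn x hxS
    simp only [← hB]
    have h2 : σ * (2 * Real.pi * (T * deriv (deriv φ) x - B))
      = 2 * Real.pi * (σ * deriv (deriv φ) x * T - σ * B) := by ring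
    rw [h2]
    have h3 : c₀ * T / 2 ≤ σ * deriv (deriv φ) x * T - σ * B := by linarith
    have h4 : 0 < c₀ * T := by positivity
    nlinarith
end
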